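/- arXiv:0907.4894 — 2 statements merged into one kernel-verified Lean document; each statement's English description precedes it below -/
import Mathlib

section
/- For every complex number s with Re(s) > 1, ∑_{n=1}^∞ b₄(n)/n^s = (1 + 2^{-2s} + 2·2^{-3s} + 4·2^{-4s}) · ∏_{p prime, p ≡ 3 (mod 4)} (1 + p^{-s}) · ∏_{p prime, p ≡ 1 (mod 4)} (1 + 3·p^{-s}). -/
/-- `b₄ n` is the number of primitive Dirichlet characters `χ` modulo `n` with values in `ℂ`
satisfying `χ ^ 4 = 1`. -/
noncomputable def b₄ (n : ℕ) : ℕ :=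
  Nat.card {χ : DirichletCharacter ℂ n // χ.IsPrimitive ∧ χ ^ 4 = 1}

/-- A multiplicative function bounded by another one on prime powers is bounded by it everywhere. -/
lemma ArithmeticFunction.IsMultiplicative.le_of_prime_pow {f g : ArithmeticFunction ℕ}
    (hf : f.IsMultiplicative) (hg : g.IsMultiplicative)
    (h : ∀ p k : ℕ, p.Prime → f (p ^ k) ≤ g (p ^ k)) (n : ℕ) : f n ≤ g n := by
  induction n using Nat.recOnPosPrimePosCoprime with
  | prime_pow p k hp _ => exact h p k hp
  | zero => simp
  | one => simp [hf.map_one, hg.map_one]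
  | coprime a b _ _ hab iha ihb =>
    rw [hf.map_mul_of_coprime hab, hg.map_mul_of_coprime hab]
    exact Nat.mul_le_mul iha ihb

/-- The number of solutions of `u ^ k = 1` in `(ℤ/nℤ)ˣ`. -/
noncomputable def cardUnitsPowEqOne (k n : ℕ) : ℕ :=
  Nat.card {u : (ZMod n)ˣ // u ^ k = 1}

lemma card_pow_eq_one_congr {G H : Type*} [Monoid G] [Monoid H] (e : G ≃* H) (k : ℕ) :
    Nat.card {u : G // u ^ k = 1} = Nat.card {u : H // u ^ k = 1} :=
  Nat.card_congr <| e.toEquiv.subtypeEquiv fun u => by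
    simp [← map_pow]

lemma cardUnitsPowEqOne_mul_of_coprime (k : ℕ) {m n : ℕ} (h : m.Coprime n) :
    cardUnitsPowEqOne k (m * n) = cardUnitsPowEqOne k m * cardUnitsPowEqOne k n := by
  unfold cardUnitsPowEqOne
  rw [card_pow_eq_one_congr
    ((Units.mapEquiv (ZMod.chineseRemainder h).toMulEquiv).trans MulEquiv.prodUnits) k,
    ← Nat.card_prod]
  exact Nat.card_congr <| (Equiv.subtypeEquivRight fun u => by
    simp [Prod.ext_iff]).trans Equiv.subtypeProdEquivProd

lemma cardUnitsPowEqOne_of_isCyclic (k n : ℕ) [NeZero n] [IsCyclic (ZMod n)ˣ] :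
    cardUnitsPowEqOne k n = n.totient.gcd k := by
  rw [← ZMod.card_units_eq_totient, ← Nat.card_eq_fintype_card,
    ← IsCyclic.card_powMonoidHom_ker]
  rfl

lemma card_dirichletCharacter_pow_eq_one (k n : ℕ) [NeZero n] :
    Nat.card {χ : DirichletCharacter ℂ n // χ ^ k = 1} = cardUnitsPowEqOne k n :=
  card_pow_eq_one_congr (MulChar.mulEquiv_units (ZMod n) ℂ).some k

/-- Sorting the Dirichlet characters modulo `n` by their conductor. -/
lemma sum_divisors_card_isPrimitive_pow_eq_one (k n : ℕ) [NeZero n] :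
    ∑ d ∈ n.divisors, Nat.card {χ : DirichletCharacter ℂ d // χ.IsPrimitive ∧ χ ^ k = 1} =
      cardUnitsPowEqOne k n := by
  have (d : n.divisors) : NeZero (d : ℕ) := ⟨(Nat.pos_of_mem_divisors d.2).ne'⟩
  rw [← card_dirichletCharacter_pow_eq_one, ← Finset.sum_coe_sort, ← Nat.card_sigma]
  let F : (Σ d : n.divisors, {χ : DirichletCharacter ℂ d // χ.IsPrimitive ∧ χ ^ k = 1}) →
      {χ : DirichletCharacter ℂ n // χ ^ k = 1} := fun x =>
    ⟨DirichletCharacter.changeLevel (Nat.dvd_of_mem_divisors x.1.2) x.2.1, by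
      rw [← map_pow, x.2.2.2, map_one]⟩
  refine Nat.card_congr (Equiv.ofBijective F ⟨?_, ?_⟩)
  · rintro ⟨⟨d, hd⟩, χ, hχ, hχk⟩ ⟨⟨e, he⟩, ψ, hψ, hψk⟩ h
    have h' := congrArg Subtype.val h
    simp only [F] at h'
    have hc := congrArg DirichletCharacter.conductor h'
    rw [DirichletCharacter.conductor_changeLevel, DirichletCharacter.conductor_changeLevel,
      hχ, hψ] at hc
    subst hc
    cases DirichletCharacter.changeLevel_injective _ h'
    rfl
  · rintro ⟨χ, hχ⟩
    refine ⟨⟨⟨χ.conductor, Nat.mem_divisors.2 ⟨χ.conductor_dvd_level, NeZero.ne n⟩⟩,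
      χ.primitiveCharacter, χ.primitiveCharacter_isPrimitive, ?_⟩, ?_⟩
    · apply DirichletCharacter.changeLevel_injective χ.conductor_dvd_level
      rw [map_pow, χ.changeLevel_primitiveCharacter, hχ, map_one]
    · exact Subtype.ext χ.changeLevel_primitiveCharacter

lemma sum_divisors_b₄ {n : ℕ} (hn : n ≠ 0) :
    ∑ d ∈ n.divisors, b₄ d = cardUnitsPowEqOne 4 n :=
  have : NeZero n := ⟨hn⟩
  sum_divisors_card_isPrimitive_pow_eq_one 4 n

/-- `b₄` as an arithmetic function. -/
noncomputable def b₄Arith : ArithmeticFunction ℕ :=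
  ⟨fun n => if n = 0 then 0 else b₄ n, if_pos rfl⟩

lemma b₄Arith_apply {n : ℕ} (hn : n ≠ 0) : b₄Arith n = b₄ n := if_neg hn

open scoped ArithmeticFunction.zeta ArithmeticFunction.Moebius in
lemma isMultiplicative_b₄Arith : b₄Arith.IsMultiplicative := by
  have hsum {n : ℕ} (hn : n ≠ 0) :
      ((b₄Arith : ArithmeticFunction ℤ) * ζ) n = cardUnitsPowEqOne 4 n := by
    rw [ArithmeticFunction.coe_mul_zeta_apply, ← sum_divisors_b₄ hn, Nat.cast_sum]
    refine Finset.sum_congr rfl fun d hd => ?_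
    rw [ArithmeticFunction.natCoe_apply, b₄Arith_apply (Nat.pos_of_mem_divisors hd).ne']
  have hmul : ((b₄Arith : ArithmeticFunction ℤ) * ζ).IsMultiplicative := by
    rw [ArithmeticFunction.IsMultiplicative.iff_ne_zero]
    refine ⟨?_, fun {m n} hm hn h => ?_⟩
    · rw [hsum one_ne_zero]
      simp [cardUnitsPowEqOne]
    · rw [hsum (mul_ne_zero hm hn), hsum hm, hsum hn, cardUnitsPowEqOne_mul_of_coprime 4 h,
        Nat.cast_mul]
  have hb : (b₄Arith : ArithmeticFunction ℤ).IsMultiplicative := by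
    have := hmul.mul ArithmeticFunction.isMultiplicative_moebius
    rwa [mul_assoc, ArithmeticFunction.coe_zeta_mul_moebius, mul_one] at this
  refine ⟨?_, fun {m n} h => ?_⟩
  · have := hb.map_one
    rw [ArithmeticFunction.natCoe_apply] at this
    exact_mod_cast this
  · have := hb.map_mul_of_coprime h
    simp only [ArithmeticFunction.natCoe_apply] at this
    exact_mod_cast this

lemma b₄_prime_pow_succ_add {p : ℕ} (hp : p.Prime) (k : ℕ) :
    b₄ (p ^ (k + 1)) + cardUnitsPowEqOne 4 (p ^ k) = cardUnitsPowEqOne 4 (p ^ (k + 1)) := by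
  rw [← sum_divisors_b₄ (pow_ne_zero _ hp.ne_zero), ← sum_divisors_b₄ (pow_ne_zero _ hp.ne_zero),
    Nat.sum_divisors_prime_pow hp, Nat.sum_divisors_prime_pow hp, Finset.sum_range_succ _ (k + 1),
    add_comm]

lemma b₄_one : b₄ 1 = 1 := by
  rw [← b₄Arith_apply one_ne_zero, isMultiplicative_b₄Arith.1]

lemma cardUnitsPowEqOne_four_one : cardUnitsPowEqOne 4 1 = 1 := by
  simp [cardUnitsPowEqOne]

lemma cardUnitsPowEqOne_prime_pow {p : ℕ} (hp : p.Prime) (hp2 : p ≠ 2) (k : ℕ) :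
    cardUnitsPowEqOne 4 (p ^ (k + 1)) = (p - 1).gcd 4 := by
  have : NeZero (p ^ (k + 1)) := ⟨pow_ne_zero _ hp.ne_zero⟩
  have := ZMod.isCyclic_units_of_prime_pow p hp hp2 (k + 1)
  rw [cardUnitsPowEqOne_of_isCyclic, Nat.totient_prime_pow_succ hp]
  refine Nat.Coprime.gcd_mul_left_cancel _ (Nat.Coprime.pow_left _ ?_)
  exact Nat.Coprime.pow_right 2 ((Nat.coprime_primes hp Nat.prime_two).2 hp2)

lemma b₄_prime {p : ℕ} (hp : p.Prime) (hp2 : p ≠ 2) : b₄ p = (p - 1).gcd 4 - 1 := by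
  have h := b₄_prime_pow_succ_add hp 0
  rw [cardUnitsPowEqOne_prime_pow hp hp2, zero_add, pow_one, pow_zero] at h
  have h1 := cardUnitsPowEqOne_four_one
  omega

lemma b₄_prime_one_mod_four {p : ℕ} (hp : p.Prime) (h : p % 4 = 1) : b₄ p = 3 := by
  rw [b₄_prime hp (by rintro rfl; simp at h),
    Nat.gcd_eq_right ((Nat.modEq_iff_dvd' hp.one_le).1 (by simp [Nat.ModEq, h]))]

lemma b₄_prime_three_mod_four {p : ℕ} (hp : p.Prime) (h : p % 4 = 3) : b₄ p = 1 := by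
  have h2 : (p - 1) % 4 = 2 := by omega
  rw [b₄_prime hp (by rintro rfl; simp at h), Nat.gcd_comm, Nat.gcd_rec, h2]
  rfl

lemma b₄_prime_pow_add_two {p : ℕ} (hp : p.Prime) (hp2 : p ≠ 2) (k : ℕ) :
    b₄ (p ^ (k + 2)) = 0 := by
  have h := b₄_prime_pow_succ_add hp (k + 1)
  rw [cardUnitsPowEqOne_prime_pow hp hp2, cardUnitsPowEqOne_prime_pow hp hp2] at h
  exact Nat.add_eq_right.1 h

lemma cardUnitsPowEqOne_four_two : cardUnitsPowEqOne 4 2 = 1 := by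
  rw [cardUnitsPowEqOne, Nat.card_eq_fintype_card]; decide

lemma cardUnitsPowEqOne_four_four : cardUnitsPowEqOne 4 4 = 2 := by
  rw [cardUnitsPowEqOne, Nat.card_eq_fintype_card]; decide

lemma cardUnitsPowEqOne_four_eight : cardUnitsPowEqOne 4 8 = 4 := by
  rw [cardUnitsPowEqOne, Nat.card_eq_fintype_card]; decide

lemma cardUnitsPowEqOne_four_sixteen : cardUnitsPowEqOne 4 16 = 8 := by
  rw [cardUnitsPowEqOne, Nat.card_eq_fintype_card]; decide

lemma b₄_two : b₄ 2 = 0 := by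
  have h := b₄_prime_pow_succ_add Nat.prime_two 0
  norm_num [cardUnitsPowEqOne_four_one, cardUnitsPowEqOne_four_two] at h
  exact h

lemma b₄_four : b₄ 4 = 1 := by
  have h := b₄_prime_pow_succ_add Nat.prime_two 1
  norm_num [cardUnitsPowEqOne_four_two, cardUnitsPowEqOne_four_four] at h
  omega

lemma b₄_eight : b₄ 8 = 2 := by
  have h := b₄_prime_pow_succ_add Nat.prime_two 2
  norm_num [cardUnitsPowEqOne_four_eight, cardUnitsPowEqOne_four_four] at h
  omega

lemma b₄_sixteen : b₄ 16 = 4 := by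
  have h := b₄_prime_pow_succ_add Nat.prime_two 3
  norm_num [cardUnitsPowEqOne_four_eight, cardUnitsPowEqOne_four_sixteen] at h
  omega

/-- Every element of the kernel of `(ℤ/2^(k+5)ℤ)ˣ → (ℤ/2^(k+4)ℤ)ˣ` is a fourth power. -/
lemma exists_pow_four_eq_of_mem_ker_unitsMap (k : ℕ) {u : (ZMod (2 ^ (k + 5)))ˣ}
    (hu : u ∈ (ZMod.unitsMap (pow_dvd_pow 2 (Nat.le_succ (k + 4)))).ker) :
    ∃ v : (ZMod (2 ^ (k + 5)))ˣ, v ^ 4 = u := by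
  have hzero : (2 : ZMod (2 ^ (k + 5))) ^ (k + 5) = 0 := by
    exact_mod_cast ZMod.natCast_self (2 ^ (k + 5))
  have hu' : ((u : ZMod (2 ^ (k + 5))).val : ZMod (2 ^ (k + 4))) = 1 := by
    have := congrArg Units.val (MonoidHom.mem_ker.1 hu)
    rw [ZMod.unitsMap_val, Units.val_one] at this
    rw [← this, ZMod.natCast_val]
  obtain ⟨c, hc⟩ : ∃ c : ℤ, ((u : ZMod (2 ^ (k + 5))).val : ℤ) = 1 + 2 ^ (k + 4) * c := by
    have : (((u : ZMod (2 ^ (k + 5))).val - 1 : ℤ) : ZMod (2 ^ (k + 4))) = 0 := by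
      push_cast
      rw [hu', sub_self]
    obtain ⟨c, hc⟩ := (ZMod.intCast_zmod_eq_zero_iff_dvd _ _).1 this
    exact ⟨c, by push_cast at hc; linarith⟩
  have hval : (u : ZMod (2 ^ (k + 5))) = 1 + 2 ^ (k + 4) * (c : ZMod (2 ^ (k + 5))) := by
    have := congrArg (Int.cast : ℤ → ZMod (2 ^ (k + 5))) hc
    push_cast at this
    rwa [ZMod.natCast_zmod_val] at this
  have hpow : (1 + 2 ^ (k + 2) * (c : ZMod (2 ^ (k + 5)))) ^ 4 = u := by
    rw [hval]
    linear_combination (3 * 2 ^ k * c ^ 2 + 2 ^ (2 * k + 3) * c ^ 3 +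
      2 ^ (3 * k + 3) * (c : ZMod (2 ^ (k + 5))) ^ 4) * hzero
  have hunit : IsUnit (1 + 2 ^ (k + 2) * (c : ZMod (2 ^ (k + 5)))) :=
    (isUnit_pow_iff four_ne_zero).1 (hpow ▸ u.isUnit)
  exact ⟨hunit.unit, Units.ext hpow⟩

lemma b₄_two_pow_add_five (k : ℕ) : b₄ (2 ^ (k + 5)) = 0 := by
  rw [b₄, Nat.card_eq_zero]
  refine .inl ⟨fun ⟨χ, hprim, hχ⟩ => ?_⟩
  have hfac : χ.FactorsThrough (2 ^ (k + 4)) := by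
    rw [DirichletCharacter.factorsThrough_iff_ker_unitsMap (pow_dvd_pow 2 (Nat.le_succ (k + 4)))]
    intro u hu
    obtain ⟨v, rfl⟩ := exists_pow_four_eq_of_mem_ker_unitsMap k hu
    rw [MonoidHom.mem_ker, Units.ext_iff, MulChar.coe_toUnitHom, Units.val_pow_eq_pow_val, map_pow,
      ← MulChar.pow_apply' χ four_ne_zero, hχ, MulChar.one_apply_coe, Units.val_one]
  have h' : χ.conductor ≤ 2 ^ (k + 4) := Nat.sInf_le hfac
  rw [hprim] at h'
  exact absurd h' (not_le.2 (Nat.pow_lt_pow_right one_lt_two (by omega)))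

open scoped ArithmeticFunction.zeta in
lemma zeta_mul_zeta_mul_zeta_prime_pow {p : ℕ} (hp : p.Prime) (k : ℕ) :
    (ζ * ζ * ζ) (p ^ k) = ∑ i ∈ Finset.range (k + 1), (i + 1) := by
  rw [ArithmeticFunction.mul_zeta_apply, Nat.sum_divisors_prime_pow hp]
  refine Finset.sum_congr rfl fun i _ => ?_
  rw [ArithmeticFunction.mul_zeta_apply, Nat.sum_divisors_prime_pow hp]
  simp [hp.ne_zero]

open scoped ArithmeticFunction.zeta in
lemma b₄Arith_le (n : ℕ) : b₄Arith n ≤ (ζ * ζ * ζ) n := by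
  refine isMultiplicative_b₄Arith.le_of_prime_pow
    ((ArithmeticFunction.isMultiplicative_zeta.mul ArithmeticFunction.isMultiplicative_zeta).mul
      ArithmeticFunction.isMultiplicative_zeta) (fun p k hp => ?_) n
  rw [b₄Arith_apply (pow_ne_zero _ hp.ne_zero), zeta_mul_zeta_mul_zeta_prime_pow hp]
  rcases eq_or_ne p 2 with rfl | hp2
  · match k with
    | 0 => simp [b₄_one]
    | 1 => simp [b₄_two]
    | 2 => simp [b₄_four, Finset.sum_range_succ]
    | 3 => simp [b₄_eight, Finset.sum_range_succ]
    | 4 => simp [b₄_sixteen, Finset.sum_range_succ]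
    | k + 5 => simp [b₄_two_pow_add_five]
  · match k with
    | 0 => simp [b₄_one]
    | 1 =>
      have : (p - 1).gcd 4 ≤ 4 := Nat.gcd_le_right _ (by norm_num)
      simp only [pow_one, b₄_prime hp hp2, Finset.sum_range_succ, Finset.sum_range_zero]
      omega
    | k + 2 => simp [b₄_prime_pow_add_two hp hp2]

open scoped ArithmeticFunction.zeta in
lemma b₄_LSeriesSummable {s : ℂ} (hs : 1 < s.re) : LSeriesSummable (fun n => (b₄ n : ℂ)) s := by
  have hζ : LSeriesSummable (fun n => ((ζ : ArithmeticFunction ℂ) n)) s := by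
    simpa using ArithmeticFunction.LSeriesSummable_zeta_iff.2 hs
  have h := ArithmeticFunction.LSeriesSummable_mul
    (ArithmeticFunction.LSeriesSummable_mul hζ hζ) hζ
  refine Summable.of_norm_bounded h.norm fun n => ?_
  rcases eq_or_ne n 0 with rfl | hn
  · simp
  refine LSeries.norm_term_le s ?_
  simp only [← ArithmeticFunction.natCoe_mul, ArithmeticFunction.natCoe_apply,
    Complex.norm_natCast]
  exact_mod_cast b₄Arith_apply hn ▸ b₄Arith_le n

/-- The term of an `L`-series at a power of `p`. -/
lemma LSeries_term_pow {p : ℕ} (hp : p ≠ 0) (f : ℕ → ℂ) (s : ℂ) (e : ℕ) :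
    LSeries.term f s (p ^ e) = f (p ^ e) * (p : ℂ) ^ (-(e * s)) := by
  rw [LSeries.term_of_ne_zero (pow_ne_zero _ hp), Nat.cast_pow, Complex.cpow_neg,
    Complex.natCast_cpow_natCast_mul, div_eq_mul_inv]

lemma tsum_term_b₄_two_pow (s : ℂ) :
    ∑' e, LSeries.term (fun n => (b₄ n : ℂ)) s (2 ^ e) =
      1 + (2 : ℂ) ^ (-(2 * s)) + 2 * (2 : ℂ) ^ (-(3 * s)) + 4 * (2 : ℂ) ^ (-(4 * s)) := by
  simp_rw [LSeries_term_pow two_ne_zero]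
  rw [tsum_eq_sum (s := Finset.range 5)]
  · simp [Finset.sum_range_succ, b₄_one, b₄_two, b₄_four, b₄_eight, b₄_sixteen]
  · intro e he
    obtain ⟨k, rfl⟩ := Nat.exists_eq_add_of_le' (not_lt.1 (Finset.mem_range.not.1 he))
    simp [b₄_two_pow_add_five]

lemma tsum_term_b₄_prime_pow {p : ℕ} (hp : p.Prime) (hp2 : p ≠ 2) (s : ℂ) :
    ∑' e, LSeries.term (fun n => (b₄ n : ℂ)) s (p ^ e) = 1 + b₄ p * (p : ℂ) ^ (-s) := by
  simp_rw [LSeries_term_pow hp.ne_zero]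
  rw [tsum_eq_sum (s := Finset.range 2)]
  · simp [Finset.sum_range_succ, b₄_one]
  · intro e he
    obtain ⟨k, rfl⟩ := Nat.exists_eq_add_of_le' (not_lt.1 (Finset.mem_range.not.1 he))
    simp [b₄_prime_pow_add_two hp hp2]

lemma b₄_hasProd {s : ℂ} (hs : 1 < s.re) :
    HasProd (fun p : Nat.Primes => ∑' e, LSeries.term (fun n => (b₄ n : ℂ)) s (p ^ e))
      (LSeries (fun n => (b₄ n : ℂ)) s) := by
  refine EulerProduct.eulerProduct_hasProd ?_ (fun {m n} h => ?_) (b₄_LSeriesSummable hs).norm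
    (LSeries.term_zero ..)
  · simp [LSeries.term_of_ne_zero, b₄_one]
  · rcases eq_or_ne m 0 with rfl | hm
    · simp
    rcases eq_or_ne n 0 with rfl | hn
    · simp
    rw [LSeries.term_of_ne_zero hm, LSeries.term_of_ne_zero hn,
      LSeries.term_of_ne_zero (mul_ne_zero hm hn), ← b₄Arith_apply hm, ← b₄Arith_apply hn,
      ← b₄Arith_apply (mul_ne_zero hm hn), isMultiplicative_b₄Arith.map_mul_of_coprime h,
      Nat.cast_mul, Nat.cast_mul, Complex.natCast_mul_natCast_cpow, mul_div_mul_comm]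

lemma multipliable_one_add_mul_cpow {s : ℂ} (hs : 1 < s.re) (c : ℂ) (P : ℕ → Prop) :
    Multipliable fun p : {p : ℕ // P p} => 1 + c * (p : ℂ) ^ (-s) := by
  refine multipliable_one_add_of_summable ?_
  have h : Summable fun n : ℕ => ‖c * (n : ℂ) ^ (-s)‖ := by
    simp_rw [Complex.cpow_neg, ← one_div]
    exact ((Complex.summable_one_div_nat_cpow.2 hs).mul_left c).norm
  exact h.comp_injective Subtype.val_injective

theorem b₄_LSeries_eq (s : ℂ) (hs : 1 < s.re) :
    LSeries (fun n => (b₄ n : ℂ)) s =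
      (1 + (2 : ℂ) ^ (-(2 * s)) + 2 * (2 : ℂ) ^ (-(3 * s)) + 4 * (2 : ℂ) ^ (-(4 * s))) *
        (∏' p : {p : ℕ // p.Prime ∧ p % 4 = 3}, (1 + (p : ℂ) ^ (-s))) *
        (∏' p : {p : ℕ // p.Prime ∧ p % 4 = 1}, (1 + 3 * (p : ℂ) ^ (-s))) := by
  let F : ℕ → ℂ := fun p => ∑' e, LSeries.term (fun n => (b₄ n : ℂ)) s (p ^ e)
  have h2 : HasProd (F ∘ (↑) : ({2} : Set ℕ) → ℂ) (1 + (2 : ℂ) ^ (-(2 * s)) +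
      2 * (2 : ℂ) ^ (-(3 * s)) + 4 * (2 : ℂ) ^ (-(4 * s))) := by
    rw [← tsum_term_b₄_two_pow]
    exact hasProd_unique (F ∘ (↑) : ({2} : Set ℕ) → ℂ)
  have h3 : HasProd (F ∘ (↑) : {p : ℕ | p.Prime ∧ p % 4 = 3} → ℂ)
      (∏' p : {p : ℕ // p.Prime ∧ p % 4 = 3}, (1 + (p : ℂ) ^ (-s))) := by
    have := (multipliable_one_add_mul_cpow hs 1 fun p => p.Prime ∧ p % 4 = 3).hasProd
    simp only [one_mul] at this
    refine this.congr_fun fun ⟨p, hp, hp4⟩ => ?_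
    simp [F, tsum_term_b₄_prime_pow hp (by rintro rfl; simp at hp4),
      b₄_prime_three_mod_four hp hp4]
  have h1 : HasProd (F ∘ (↑) : {p : ℕ | p.Prime ∧ p % 4 = 1} → ℂ)
      (∏' p : {p : ℕ // p.Prime ∧ p % 4 = 1}, (1 + 3 * (p : ℂ) ^ (-s))) := by
    have := (multipliable_one_add_mul_cpow hs 3 fun p => p.Prime ∧ p % 4 = 1).hasProd
    refine this.congr_fun fun ⟨p, hp, hp4⟩ => ?_
    simp [F, tsum_term_b₄_prime_pow hp (by rintro rfl; simp at hp4),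
      b₄_prime_one_mod_four hp hp4]
  have hunion : {2} ∪ {p : ℕ | p.Prime ∧ p % 4 = 3} ∪ {p : ℕ | p.Prime ∧ p % 4 = 1} =
      {p : ℕ | p.Prime} := by
    ext p
    simp only [Set.mem_union, Set.mem_singleton_iff, Set.mem_ofPred_eq]
    refine ⟨?_, fun hp => ?_⟩
    · rintro ((rfl | h) | h)
      exacts [Nat.prime_two, h.1, h.1]
    · have := hp.eq_two_or_odd
      have : p % 4 = 1 ∨ p % 4 = 3 ∨ p % 2 = 0 := by omega
      grind
  have h := (h2.mul_disjoint (by simp) h3).mul_disjoint (by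
    rw [Set.disjoint_left]
    simp only [Set.mem_union, Set.mem_singleton_iff, Set.mem_ofPred_eq]
    omega) h1
  rw [hunion] at h
  exact (b₄_hasProd hs).unique h
end

section
/- As real s → 1 from the right, (s - 1) · ∏_{p prime, p ≡ 1 (mod 8)} (1 - p^{-s})^{-4} converges to (2·ln(1 + √2)/π²) · ∏_{p prime, p ≡ 1 (mod 8)} (1 - p^{-2})^{-2}. -/
open Filter Topology

lemma abs_rpow_neg_sub_rpow_neg_le {a b s : ℝ} (ha : 1 ≤ a) (hab : a ≤ b) (hs : 1 ≤ s)
    (hs' : s ≤ 2) : |a ^ (-s) - b ^ (-s)| ≤ 2 * (b - a) / a ^ 2 := by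
  have ha0 : 0 < a := by linarith
  have hb0 : 0 < b := by linarith
  have hle : b ^ (-s) ≤ a ^ (-s) := Real.rpow_le_rpow_of_nonpos ha0 hab (by linarith)
  have bern : 1 + s * (a / b - 1) ≤ (a / b) ^ s := by
    have h := one_add_mul_self_le_rpow_one_add (s := a / b - 1) (p := s)
      (by linarith [div_pos ha0 hb0]) hs
    simpa using h
  have heq : b ^ (-s) = a ^ (-s) * (a / b) ^ s := by
    rw [Real.div_rpow ha0.le hb0.le, Real.rpow_neg ha0.le, Real.rpow_neg hb0.le]
    field_simp
  have hpos : 0 < a ^ (-s) := Real.rpow_pos_of_pos ha0 _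
  have hinv : a ^ (-s) ≤ a⁻¹ := by
    rw [← Real.rpow_neg_one]
    exact Real.rpow_le_rpow_of_exponent_le ha (by linarith)
  have hdiv : 1 - a / b ≤ (b - a) / a := by
    rw [show 1 - a / b = (b - a) / b by field_simp]
    exact div_le_div_of_nonneg_left (by linarith) ha0 hab
  rw [abs_of_nonneg (by linarith)]
  calc a ^ (-s) - b ^ (-s) = a ^ (-s) * (1 - (a / b) ^ s) := by rw [heq]; ring
    _ ≤ a ^ (-s) * (s * (1 - a / b)) := by gcongr; linarith
    _ ≤ a⁻¹ * (2 * ((b - a) / a)) := by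
        have : 0 ≤ 1 - a / b := by rw [sub_nonneg, div_le_one hb0]; exact hab
        gcongr
    _ = 2 * (b - a) / a ^ 2 := by field_simp

lemma abs_block_sum_le {N : ℕ} {c : Fin N → ℝ} (hc : ∑ r, c r = 0) {s : ℝ} (hs : 1 ≤ s)
    (hs' : s ≤ 2) (k : ℕ) :
    |∑ r : Fin N, c r * ((k * N + r + 1 : ℕ) : ℝ) ^ (-s)| ≤
      (∑ r, |c r|) * (2 * N) * (1 / ((k : ℝ) + 1) ^ 2) := by
  have h : ∑ r : Fin N, c r * ((k * N + r + 1 : ℕ) : ℝ) ^ (-s) =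
      ∑ r : Fin N, c r * (((k * N + r + 1 : ℕ) : ℝ) ^ (-s) - ((k * N + N : ℕ) : ℝ) ^ (-s)) := by
    simp_rw [mul_sub, Finset.sum_sub_distrib, ← Finset.sum_mul, hc]
    simp
  rw [h, Finset.sum_mul, Finset.sum_mul]
  refine (Finset.abs_sum_le_sum_abs _ _).trans (Finset.sum_le_sum fun r _ ↦ ?_)
  rw [abs_mul, mul_assoc]
  refine mul_le_mul_of_nonneg_left ?_ (abs_nonneg _)
  have hr : (r : ℕ) + 1 ≤ N := r.2
  have hN : 1 ≤ N := by omega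
  refine (abs_rpow_neg_sub_rpow_neg_le (by exact_mod_cast Nat.le_add_left 1 _)
    (by exact_mod_cast by omega) hs hs').trans ?_
  rw [mul_one_div]
  have h1 : ((k * N + N : ℕ) : ℝ) - ((k * N + r + 1 : ℕ) : ℝ) ≤ N := by
    push_cast; linarith [(Nat.cast_nonneg (r : ℕ) : (0 : ℝ) ≤ _)]
  have h2 : (k : ℝ) + 1 ≤ ((k * N + r + 1 : ℕ) : ℝ) := by
    have : k ≤ k * N := Nat.le_mul_of_pos_right k hN
    exact_mod_cast by omega
  gcongr

lemma summable_block_bound (C : ℝ) : Summable fun k : ℕ ↦ C * (1 / ((k : ℝ) + 1) ^ 2) := by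
  refine Summable.mul_left _ ?_
  exact_mod_cast (summable_nat_add_iff 1).mpr (Real.summable_one_div_nat_pow.mpr one_lt_two)

lemma summable_mul_rpow_neg {a : ℕ → ℝ} (ha : ∀ n, |a n| ≤ 1) {s : ℝ} (hs : 1 < s) :
    Summable fun n : ℕ ↦ ‖a n * (n : ℝ) ^ (-s)‖ := by
  refine (Real.summable_nat_rpow.mpr (neg_lt_neg hs)).of_nonneg_of_le
    (fun _ ↦ norm_nonneg _) fun n ↦ ?_
  rw [norm_mul, Real.norm_of_nonneg (by positivity : (0 : ℝ) ≤ (n : ℝ) ^ (-s))]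
  exact mul_le_of_le_one_left (by positivity) (ha n)

lemma tsum_mul_rpow_neg_eq_tsum_block {N : ℕ} [NeZero N] {a : ℕ → ℝ} (hper : Function.Periodic a N)
    (ha : ∀ n, |a n| ≤ 1) {s : ℝ} (hs : 1 < s) :
    ∑' n : ℕ, a n * (n : ℝ) ^ (-s) =
      ∑' k : ℕ, ∑ r : Fin N, a (r + 1) * ((k * N + r + 1 : ℕ) : ℝ) ^ (-s) := by
  have hsum := (summable_mul_rpow_neg ha hs).of_norm
  have hsum' := (summable_nat_add_iff 1).mpr hsum
  rw [hsum.tsum_eq_zero_add, ← (Nat.divModEquiv N).symm.tsum_eq, Summable.tsum_prod]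
  · simp only [Nat.cast_zero, Real.zero_rpow (by linarith : -s ≠ 0), mul_zero, zero_add,
      tsum_fintype, Nat.divModEquiv_symm_apply]
    refine tsum_congr fun k ↦ Finset.sum_congr rfl fun r _ ↦ ?_
    congr 1
    rw [add_assoc, add_comm]
    exact hper.nat_mul k _
  · exact hsum'.comp_injective (Nat.divModEquiv N).symm.injective

lemma tendsto_tsum_mul_rpow_neg {N : ℕ} [NeZero N] {a : ℕ → ℝ} (hper : Function.Periodic a N)
    (ha : ∀ n, |a n| ≤ 1) (hzero : ∑ r : Fin N, a (r + 1) = 0) :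
    Tendsto (fun s : ℝ ↦ ∑' n : ℕ, a n * (n : ℝ) ^ (-s)) (𝓝[>] 1)
      (𝓝 (∑' k : ℕ, ∑ r : Fin N, a (r + 1) * ((k * N + r + 1 : ℕ) : ℝ) ^ (-1 : ℝ))) := by
  have hmem : ∀ᶠ s : ℝ in 𝓝[>] 1, 1 < s ∧ s < 2 := Ioo_mem_nhdsGT one_lt_two
  refine Tendsto.congr' (f₁ := fun s : ℝ ↦
    ∑' k : ℕ, ∑ r : Fin N, a (r + 1) * ((k * N + r + 1 : ℕ) : ℝ) ^ (-s)) ?_ ?_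
  · filter_upwards [hmem] with s hs
    exact (tsum_mul_rpow_neg_eq_tsum_block hper ha hs.1).symm
  · refine tendsto_tsum_of_dominated_convergence (summable_block_bound _) (fun k ↦ ?_) ?_
      (bound := fun k : ℕ ↦ (∑ r : Fin N, |a (r + 1)|) * (2 * N) * (1 / ((k : ℝ) + 1) ^ 2))
    · refine tendsto_finsetSum _ fun r _ ↦ Tendsto.const_mul _ ?_
      refine tendsto_nhdsWithin_of_tendsto_nhds (Continuous.tendsto' ?_ _ _ rfl)
      exact continuous_const.rpow continuous_neg fun _ ↦ Or.inl (by positivity)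
    · filter_upwards [hmem] with s hs k
      exact abs_block_sum_le (c := fun r : Fin N ↦ a (r + 1)) hzero hs.1.le hs.2.le k

lemma sum_range_block_eq_integral {N : ℕ} {c : Fin N → ℝ} {g : ℝ → ℝ} (hg : Continuous g)
    (hgc : ∀ x, ∑ r, c r * x ^ (r : ℕ) = g x * (1 - x ^ N)) (n : ℕ) :
    ∑ k ∈ Finset.range n, ∑ r : Fin N, c r * ((k * N + r + 1 : ℕ) : ℝ) ^ (-1 : ℝ) =
      ∫ x in (0 : ℝ)..1, g x * (1 - x ^ (n * N)) := by
  induction n with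
  | zero => simp
  | succ n ih =>
    have hstep : ∑ r : Fin N, c r * ((n * N + r + 1 : ℕ) : ℝ) ^ (-1 : ℝ) =
        ∫ x in (0 : ℝ)..1, ∑ r : Fin N, c r * x ^ (n * N + r) := by
      rw [intervalIntegral.integral_finsetSum
        fun r _ ↦ Continuous.intervalIntegrable (by fun_prop) _ _]
      refine Finset.sum_congr rfl fun r _ ↦ ?_
      rw [intervalIntegral.integral_const_mul, integral_pow, Real.rpow_neg_one]
      simp
    rw [Finset.sum_range_succ, ih, hstep, ← intervalIntegral.integral_add
      (Continuous.intervalIntegrable (by fun_prop) _ _)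
      (Continuous.intervalIntegrable (by fun_prop) _ _)]
    congr 1 with x
    have h : ∑ r : Fin N, c r * x ^ (n * N + r) = x ^ (n * N) * (g x * (1 - x ^ N)) := by
      rw [← hgc, Finset.mul_sum]
      exact Finset.sum_congr rfl fun r _ ↦ by ring
    rw [h]
    ring

lemma tsum_block_eq_integral {N : ℕ} [NeZero N] {c : Fin N → ℝ} (hc : ∑ r, c r = 0) {g : ℝ → ℝ}
    (hg : Continuous g) (hgc : ∀ x, ∑ r, c r * x ^ (r : ℕ) = g x * (1 - x ^ N)) :
    ∑' k : ℕ, ∑ r : Fin N, c r * ((k * N + r + 1 : ℕ) : ℝ) ^ (-1 : ℝ) =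
      ∫ x in (0 : ℝ)..1, g x := by
  have hsum : Summable fun k : ℕ ↦ ∑ r : Fin N, c r * ((k * N + r + 1 : ℕ) : ℝ) ^ (-1 : ℝ) :=
    .of_norm_bounded (summable_block_bound _) (abs_block_sum_le hc le_rfl one_le_two)
  refine tendsto_nhds_unique hsum.hasSum.tendsto_sum_nat ?_
  simp_rw [sum_range_block_eq_integral hg hgc]
  obtain ⟨C, hC⟩ := isCompact_Icc.exists_bound_of_continuousOn (s := Set.Icc (0 : ℝ) 1)
    hg.continuousOn
  have hrem (n : ℕ) : ‖∫ x in (0 : ℝ)..1, g x * x ^ (n * N)‖ ≤ C * (1 / ((n : ℝ) + 1)) := by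
    have hC0 : 0 ≤ C := (norm_nonneg _).trans (hC 0 (by simp))
    calc ‖∫ x in (0 : ℝ)..1, g x * x ^ (n * N)‖
        ≤ ∫ x in (0 : ℝ)..1, C * x ^ (n * N) := by
          refine intervalIntegral.norm_integral_le_of_norm_le zero_le_one
            (Eventually.of_forall fun x hx ↦ ?_)
            (Continuous.intervalIntegrable (by fun_prop) _ _)
          rw [norm_mul, norm_pow, Real.norm_of_nonneg hx.1.le]
          exact mul_le_mul_of_nonneg_right (hC x ⟨hx.1.le, hx.2⟩) (pow_nonneg hx.1.le _)
      _ = C * (1 / (((n * N : ℕ) : ℝ) + 1)) := by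
          rw [intervalIntegral.integral_const_mul, integral_pow]
          simp
      _ ≤ C * (1 / ((n : ℝ) + 1)) := by
          gcongr
          exact Nat.le_mul_of_pos_right n (NeZero.pos N)
  have hlim : Tendsto (fun n : ℕ ↦ ∫ x in (0 : ℝ)..1, g x * x ^ (n * N)) atTop (𝓝 0) :=
    squeeze_zero_norm hrem (by simpa using tendsto_one_div_add_atTop_nhds_zero_nat.const_mul C)
  have := (tendsto_const_nhds (x := ∫ x in (0 : ℝ)..1, g x)).sub hlim
  rw [sub_zero] at this
  refine this.congr fun n ↦ ?_
  rw [← intervalIntegral.integral_sub (hg.intervalIntegrable _ _)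
    (Continuous.intervalIntegrable (by fun_prop) _ _)]
  exact intervalIntegral.integral_congr fun x _ ↦ by ring

lemma abs_mulChar_int_le_one {R : Type*} [CommMonoid R] (χ : MulChar R ℤ) (a : R) :
    |((χ a : ℤ) : ℝ)| ≤ 1 := by
  by_cases ha : IsUnit a
  · rcases Int.isUnit_iff.mp (ha.map χ) with h | h <;> simp [h]
  · simp [χ.map_nonunit ha]

/-- The Dirichlet series `∑ χ(n) n⁻ˢ` at a real argument `s`, for a character `χ` with values
in `ℤ`. -/
noncomputable def realLSeries {N : ℕ} (χ : MulChar (ZMod N) ℤ) (s : ℝ) : ℝ :=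
  ∑' n : ℕ, ((χ n : ℤ) : ℝ) * (n : ℝ) ^ (-s)

lemma hasProd_realLSeries {N : ℕ} (χ : MulChar (ZMod N) ℤ) {s : ℝ} (hs : 1 < s) :
    HasProd (fun p : Nat.Primes ↦ (1 - ((χ (p : ℕ) : ℤ) : ℝ) * (p : ℝ) ^ (-s))⁻¹)
      (realLSeries χ s) := by
  let f : ℕ →*₀ ℝ :=
    { toFun := fun n ↦ ((χ n : ℤ) : ℝ) * (n : ℝ) ^ (-s)
      map_zero' := by simp [Real.zero_rpow (by linarith : -s ≠ 0)]
      map_one' := by simp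
      map_mul' := fun m n ↦ by
        push_cast
        rw [map_mul, Real.mul_rpow (Nat.cast_nonneg _) (Nat.cast_nonneg _)]
        push_cast
        ring }
  exact EulerProduct.eulerProduct_completely_multiplicative_hasProd (f := f)
    (summable_mul_rpow_neg (fun n : ℕ ↦ abs_mulChar_int_le_one χ n) hs)

lemma tendsto_realLSeries {N : ℕ} [NeZero N] (χ : MulChar (ZMod N) ℤ)
    (hzero : ∑ r : Fin N, ((χ ((r : ℕ) + 1 : ℕ) : ℤ) : ℝ) = 0) {g : ℝ → ℝ} (hg : Continuous g)
    (hgc : ∀ x, ∑ r : Fin N, ((χ ((r : ℕ) + 1 : ℕ) : ℤ) : ℝ) * x ^ (r : ℕ) = g x * (1 - x ^ N)) :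
    Tendsto (realLSeries χ) (𝓝[>] 1) (𝓝 (∫ x in (0 : ℝ)..1, g x)) := by
  rw [← tsum_block_eq_integral hzero hg hgc]
  exact tendsto_tsum_mul_rpow_neg (a := fun n ↦ ((χ n : ℤ) : ℝ)) (fun n ↦ by simp)
    (fun n ↦ abs_mulChar_int_le_one χ n) hzero

lemma tendsto_realLSeries_χ₄ : Tendsto (realLSeries ZMod.χ₄) (𝓝[>] 1) (𝓝 (Real.pi / 4)) := by
  have hint : ∫ x in (0 : ℝ)..1, (1 + x ^ 2)⁻¹ = Real.pi / 4 := by simp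
  rw [← hint]
  refine tendsto_realLSeries _ ?_
    (Continuous.inv₀ (by fun_prop) fun x ↦ by positivity) fun x ↦ ?_
  · simp only [Fin.sum_univ_four, ZMod.χ₄_nat_eq_if_mod_four]
    norm_num
  · have : 1 + x ^ 2 ≠ 0 := by positivity
    simp only [Fin.sum_univ_four, ZMod.χ₄_nat_eq_if_mod_four]
    norm_num
    field_simp
    ring

lemma integral_one_sub_sq_div_one_add_pow_four :
    ∫ x in (0 : ℝ)..1, (1 - x ^ 2) / (1 + x ^ 4) =
      Real.log (1 + Real.sqrt 2) / Real.sqrt 2 := by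
  have h2 : Real.sqrt 2 ^ 2 = 2 := Real.sq_sqrt zero_le_two
  have hpos : 0 < Real.sqrt 2 := by positivity
  have hA (x : ℝ) : 0 < x ^ 2 + Real.sqrt 2 * x + 1 := by
    nlinarith [sq_nonneg (2 * x + Real.sqrt 2)]
  have hB (x : ℝ) : 0 < x ^ 2 - Real.sqrt 2 * x + 1 := by
    nlinarith [sq_nonneg (2 * x - Real.sqrt 2)]
  have hderiv (x : ℝ) : HasDerivAt (fun x : ℝ ↦ (Real.log (x ^ 2 + Real.sqrt 2 * x + 1) -
      Real.log (x ^ 2 - Real.sqrt 2 * x + 1)) / (2 * Real.sqrt 2))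
      ((1 - x ^ 2) / (1 + x ^ 4)) x := by
    have hp : HasDerivAt (fun x : ℝ ↦ x ^ 2 + Real.sqrt 2 * x + 1) (2 * x + Real.sqrt 2) x := by
      simpa using ((hasDerivAt_pow 2 x).add ((hasDerivAt_id x).const_mul (Real.sqrt 2))).add_const 1
    have hm : HasDerivAt (fun x : ℝ ↦ x ^ 2 - Real.sqrt 2 * x + 1) (2 * x - Real.sqrt 2) x := by
      simpa using ((hasDerivAt_pow 2 x).sub ((hasDerivAt_id x).const_mul (Real.sqrt 2))).add_const 1
    have h := ((hp.log (hA x).ne').sub (hm.log (hB x).ne')).div_const (2 * Real.sqrt 2)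
    refine h.congr_deriv (Eq.symm ?_)
    have hfac : 1 + x ^ 4 = (x ^ 2 + Real.sqrt 2 * x + 1) * (x ^ 2 - Real.sqrt 2 * x + 1) := by
      linear_combination x ^ 2 * h2
    rw [hfac, div_sub_div _ _ (hA x).ne' (hB x).ne', div_div,
      div_eq_div_iff (mul_pos (hA x) (hB x)).ne'
        (mul_pos (mul_pos (hA x) (hB x)) (by positivity)).ne']
    ring
  rw [intervalIntegral.integral_eq_sub_of_hasDerivAt (fun x _ ↦ hderiv x)
    (Continuous.intervalIntegrable
      (Continuous.div (by fun_prop) (by fun_prop) fun x ↦ by positivity) _ _)]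
  have hquot : 1 ^ 2 + Real.sqrt 2 * 1 + 1 =
      (1 + Real.sqrt 2) ^ 2 * (1 ^ 2 - Real.sqrt 2 * 1 + 1) := by
    linear_combination Real.sqrt 2 * h2
  rw [hquot, Real.log_mul (by positivity) (hB 1).ne', Real.log_pow]
  simp
  field_simp

lemma integral_one_add_sq_div_one_add_pow_four :
    ∫ x in (0 : ℝ)..1, (1 + x ^ 2) / (1 + x ^ 4) = Real.pi / (2 * Real.sqrt 2) := by
  have h2 : Real.sqrt 2 ^ 2 = 2 := Real.sq_sqrt zero_le_two
  have hpos : 0 < Real.sqrt 2 := by positivity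
  have hderiv (x : ℝ) : HasDerivAt (fun x : ℝ ↦ (Real.arctan (Real.sqrt 2 * x + 1) +
      Real.arctan (Real.sqrt 2 * x - 1)) / Real.sqrt 2) ((1 + x ^ 2) / (1 + x ^ 4)) x := by
    have hlin : HasDerivAt (fun x : ℝ ↦ Real.sqrt 2 * x) (Real.sqrt 2) x := by
      simpa using (hasDerivAt_id x).const_mul (Real.sqrt 2)
    have h := ((hlin.add_const 1).arctan.add (hlin.sub_const 1).arctan).div_const (Real.sqrt 2)
    refine h.congr_deriv (Eq.symm ?_)
    have hfac : 4 * (1 + x ^ 4) =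
        (1 + (Real.sqrt 2 * x + 1) ^ 2) * (1 + (Real.sqrt 2 * x - 1) ^ 2) := by
      linear_combination (-x ^ 4 * (Real.sqrt 2 ^ 2 + 2)) * h2
    have hA : 0 < 1 + (Real.sqrt 2 * x + 1) ^ 2 := by positivity
    have hB : 0 < 1 + (Real.sqrt 2 * x - 1) ^ 2 := by positivity
    have hsum : 1 / (1 + (Real.sqrt 2 * x + 1) ^ 2) + 1 / (1 + (Real.sqrt 2 * x - 1) ^ 2) =
        (1 + x ^ 2) / (1 + x ^ 4) := by
      rw [div_add_div _ _ hA.ne' hB.ne', ← hfac, div_eq_div_iff (by positivity) (by positivity)]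
      linear_combination 2 * x ^ 2 * (1 + x ^ 4) * h2
    rw [← add_mul, hsum]
    field_simp
  rw [intervalIntegral.integral_eq_sub_of_hasDerivAt (fun x _ ↦ hderiv x)
    (Continuous.intervalIntegrable
      (Continuous.div (by fun_prop) (by fun_prop) fun x ↦ by positivity) _ _)]
  have hinv : Real.sqrt 2 * 1 - 1 = (Real.sqrt 2 * 1 + 1)⁻¹ := by
    rw [← mul_eq_one_iff_eq_inv₀ (by positivity)]
    linear_combination h2
  rw [hinv, Real.arctan_inv_of_pos (by positivity)]
  simp [Real.arctan_neg]
  field_simp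

lemma tendsto_realLSeries_χ₈ :
    Tendsto (realLSeries ZMod.χ₈) (𝓝[>] 1) (𝓝 (Real.log (1 + Real.sqrt 2) / Real.sqrt 2)) := by
  rw [← integral_one_sub_sq_div_one_add_pow_four]
  refine tendsto_realLSeries _ ?_
    (Continuous.div (by fun_prop) (by fun_prop) fun x ↦ by positivity) fun x ↦ ?_
  · simp only [Fin.sum_univ_eight, ZMod.χ₈_nat_eq_if_mod_eight]
    norm_num
  · have : 1 + x ^ 4 ≠ 0 := by positivity
    simp only [Fin.sum_univ_eight, ZMod.χ₈_nat_eq_if_mod_eight]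
    norm_num
    field_simp
    ring

lemma tendsto_realLSeries_χ₈' :
    Tendsto (realLSeries ZMod.χ₈') (𝓝[>] 1) (𝓝 (Real.pi / (2 * Real.sqrt 2))) := by
  rw [← integral_one_add_sq_div_one_add_pow_four]
  refine tendsto_realLSeries _ ?_
    (Continuous.div (by fun_prop) (by fun_prop) fun x ↦ by positivity) fun x ↦ ?_
  · simp only [Fin.sum_univ_eight, ZMod.χ₈'_nat_eq_if_mod_eight]
    norm_num
  · have : 1 + x ^ 4 ≠ 0 := by positivity
    simp only [Fin.sum_univ_eight, ZMod.χ₈'_nat_eq_if_mod_eight]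
    norm_num
    field_simp
    ring

lemma realLSeries_one_eq (s : ℝ) :
    realLSeries (1 : MulChar (ZMod 1) ℤ) s = ∑' n : ℕ, 1 / (n : ℝ) ^ s := by
  refine tsum_congr fun n ↦ ?_
  rw [MulChar.one_apply (isUnit_of_subsingleton _), Real.rpow_neg (Nat.cast_nonneg _)]
  simp

lemma tendsto_sub_mul_realLSeries_one :
    Tendsto (fun s : ℝ ↦ (s - 1) * realLSeries (1 : MulChar (ZMod 1) ℤ) s) (𝓝[>] 1) (𝓝 1) := by
  simpa only [realLSeries_one_eq] using tendsto_sub_mul_tsum_nat_rpow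

lemma rpow_neg_two_mul_le {n : ℕ} (hn : n ≠ 0) {s : ℝ} (hs : 1 ≤ s) :
    (n : ℝ) ^ (-(2 * s)) ≤ (n : ℝ) ^ (-2 : ℝ) :=
  Real.rpow_le_rpow_of_exponent_le (by exact_mod_cast Nat.one_le_iff_ne_zero.mpr hn) (by linarith)

lemma tendsto_rpow_neg_two_mul {n : ℕ} (hn : n ≠ 0) :
    Tendsto (fun s : ℝ ↦ (n : ℝ) ^ (-(2 * s))) (𝓝[>] 1) (𝓝 ((n : ℝ) ^ (-2 : ℝ))) := by
  refine tendsto_nhdsWithin_of_tendsto_nhds (Continuous.tendsto' ?_ _ _ (by norm_num))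
  exact continuous_const.rpow (by fun_prop) fun _ ↦ Or.inl (by exact_mod_cast hn)

lemma tendsto_realLSeries_one_two_mul :
    Tendsto (fun s : ℝ ↦ realLSeries (1 : MulChar (ZMod 1) ℤ) (2 * s)) (𝓝[>] 1)
      (𝓝 (Real.pi ^ 2 / 6)) := by
  have hval : ∑' n : ℕ, ((n + 1 : ℕ) : ℝ) ^ (-2 : ℝ) = Real.pi ^ 2 / 6 := by
    have h := hasSum_zeta_two
    rw [← hasSum_nat_add_iff' 1] at h
    simpa [Real.rpow_neg, add_nonneg] using h.tsum_eq
  have hcongr : ∀ᶠ s : ℝ in 𝓝[>] 1, ∑' n : ℕ, ((n + 1 : ℕ) : ℝ) ^ (-(2 * s)) =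
      realLSeries (1 : MulChar (ZMod 1) ℤ) (2 * s) := by
    filter_upwards [self_mem_nhdsWithin] with s (hs : 1 < s)
    have hsum : Summable fun n : ℕ ↦ (n : ℝ) ^ (-(2 * s)) :=
      Real.summable_nat_rpow.mpr (by linarith)
    have h0 : ((0 : ℕ) : ℝ) ^ (-(2 * s)) = 0 := by
      rw [Nat.cast_zero, Real.zero_rpow (by linarith)]
    rw [realLSeries_one_eq]
    simp_rw [one_div, ← Real.rpow_neg (Nat.cast_nonneg _)]
    rw [hsum.tsum_eq_zero_add, h0, zero_add]
  refine Tendsto.congr' hcongr ?_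
  rw [← hval]
  refine tendsto_tsum_of_dominated_convergence
    ((summable_nat_add_iff 1).mpr (Real.summable_nat_rpow.mpr (by norm_num : (-2 : ℝ) < -1)))
    (fun n ↦ tendsto_rpow_neg_two_mul n.succ_ne_zero) ?_
  filter_upwards [self_mem_nhdsWithin] with s (hs : 1 < s) n
  rw [Real.norm_of_nonneg (by positivity)]
  exact rpow_neg_two_mul_le n.succ_ne_zero hs.le

/-- The partial Euler product `∏ (1 - p⁻ˢ)` over the primes `p ≡ 1 (mod 8)`. -/
noncomputable def oneModEightProd (s : ℝ) : ℝ :=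
  ∏' p : {p : ℕ // p.Prime ∧ p % 8 = 1}, (1 - (p : ℝ) ^ (-s))

lemma summable_oneModEight_rpow_neg {s : ℝ} (hs : 1 < s) :
    Summable fun p : {p : ℕ // p.Prime ∧ p % 8 = 1} ↦ (p : ℝ) ^ (-s) :=
  (Real.summable_nat_rpow.mpr (neg_lt_neg hs)).comp_injective Subtype.val_injective

lemma rpow_neg_lt_one_of_prime {p : ℕ} (hp : p.Prime) {s : ℝ} (hs : 0 < s) :
    (p : ℝ) ^ (-s) < 1 :=
  Real.rpow_lt_one_of_one_lt_of_neg (by exact_mod_cast hp.one_lt) (neg_lt_zero.mpr hs)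

lemma oneModEightProd_ne_zero {s : ℝ} (hs : 1 < s) : oneModEightProd s ≠ 0 := by
  unfold oneModEightProd
  simp_rw [sub_eq_add_neg]
  refine tprod_one_add_ne_zero_of_summable (fun p ↦ ?_) ?_
  · linarith [rpow_neg_lt_one_of_prime p.2.1 (by linarith : 0 < s)]
  · simpa using (summable_oneModEight_rpow_neg hs).norm

lemma hasProd_inv_oneModEightProd {s : ℝ} (hs : 1 < s) :
    HasProd (fun p : {p : ℕ // p.Prime ∧ p % 8 = 1} ↦ (1 - (p : ℝ) ^ (-s))⁻¹)
      (oneModEightProd s)⁻¹ := by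
  refine HasProd.inv₀ (Multipliable.hasProd ?_) (oneModEightProd_ne_zero hs)
  simp_rw [sub_eq_add_neg]
  exact multipliable_one_add_of_summable (by simpa using (summable_oneModEight_rpow_neg hs).norm)

lemma tendsto_oneModEightProd_two_mul :
    Tendsto (fun s : ℝ ↦ oneModEightProd (2 * s)) (𝓝[>] 1) (𝓝 (oneModEightProd 2)) := by
  unfold oneModEightProd
  simp_rw [sub_eq_add_neg]
  refine tendsto_tprod_one_add_of_dominated_convergence
    (summable_oneModEight_rpow_neg one_lt_two)
    (fun p ↦ (tendsto_rpow_neg_two_mul p.2.1.ne_zero).neg) ?_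
  filter_upwards [self_mem_nhdsWithin] with s (hs : 1 < s) p
  rw [norm_neg, Real.norm_of_nonneg (by positivity)]
  exact rpow_neg_two_mul_le p.2.1.ne_zero hs.le

/-- Comparison of Euler factors: the product of the four `L`-series attached to `1`, `χ₄`, `χ₈`
and `χ₈'` has the factor `(1 - p⁻ˢ)⁻⁴` at `p ≡ 1 (mod 8)` and `(1 - p⁻²ˢ)⁻²` at the other odd
primes. -/
lemma realLSeries_prod_eq {s : ℝ} (hs : 1 < s) :
    realLSeries (1 : MulChar (ZMod 1) ℤ) s * realLSeries ZMod.χ₄ s * realLSeries ZMod.χ₈ s *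
        realLSeries ZMod.χ₈' s * ((oneModEightProd (2 * s))⁻¹ ^ 2) *
        ((1 - 2 ^ (-s)) * (1 - 2 ^ (-(2 * s)))⁻¹ ^ 2) =
      (oneModEightProd s)⁻¹ ^ 4 * realLSeries (1 : MulChar (ZMod 1) ℤ) (2 * s) ^ 2 := by
  have hs2 : 1 < 2 * s := by linarith
  have hL {N : ℕ} (χ : MulChar (ZMod N) ℤ) {t : ℝ} (ht : 1 < t) :=
    (hasProd_subtype_iff_mulIndicator (s := {p : ℕ | p.Prime})
      (f := fun p : ℕ ↦ (1 - ((χ p : ℤ) : ℝ) * (p : ℝ) ^ (-t))⁻¹)).mp (hasProd_realLSeries χ ht)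
  have hQ {t : ℝ} (ht : 1 < t) :=
    (hasProd_subtype_iff_mulIndicator (s := {p : ℕ | p.Prime ∧ p % 8 = 1})
      (f := fun p : ℕ ↦ (1 - (p : ℝ) ^ (-t))⁻¹)).mp (hasProd_inv_oneModEightProd ht)
  have htwo := hasProd_ite_eq (2 : ℕ) ((1 - (2 : ℝ) ^ (-s)) * (1 - 2 ^ (-(2 * s)))⁻¹ ^ 2)
  have hleft := (((((hL (1 : MulChar (ZMod 1) ℤ) hs).mul (hL ZMod.χ₄ hs)).mul (hL ZMod.χ₈ hs)).mul
    (hL ZMod.χ₈' hs)).mul ((hQ hs2).pow 2)).mul htwo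
  have hright := ((hQ hs).pow 4).mul ((hL (1 : MulChar (ZMod 1) ℤ) hs2).pow 2)
  refine hleft.unique ?_
  convert! hright using 1
  funext p
  by_cases hp : p.Prime
  swap
  · have hp2 : p ≠ 2 := by
      rintro rfl
      exact hp Nat.prime_two
    simp [hp, hp2]
  have hone : (1 : MulChar (ZMod 1) ℤ) (p : ZMod 1) = 1 :=
    MulChar.one_apply (isUnit_of_subsingleton _)
  have hsq (n : ℕ) : (n : ℝ) ^ (-(2 * s)) = ((n : ℝ) ^ (-s)) ^ 2 := by
    rw [← Real.rpow_mul_natCast (Nat.cast_nonneg _)]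
    congr 1
    push_cast
    ring
  have hx0 : 0 < (p : ℝ) ^ (-s) := Real.rpow_pos_of_pos (by exact_mod_cast hp.pos) _
  have hx1 : (p : ℝ) ^ (-s) < 1 := rpow_neg_lt_one_of_prime hp (by linarith)
  have hm : 1 - (p : ℝ) ^ (-s) ≠ 0 := by linarith
  have hn : 1 + (p : ℝ) ^ (-s) ≠ 0 := by linarith
  have hfac : 1 - ((p : ℝ) ^ (-s)) ^ 2 = (1 - (p : ℝ) ^ (-s)) * (1 + (p : ℝ) ^ (-s)) := by ring
  rcases hp.eq_two_or_odd with rfl | hodd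
  · simp only [Set.mulIndicator, Set.mem_ofPred_eq, hp, hone, hsq, ZMod.χ₄_nat_eq_if_mod_four,
      ZMod.χ₈_nat_eq_if_mod_eight, ZMod.χ₈'_nat_eq_if_mod_eight]
    have h2 := hsq 2
    push_cast at h2 hm ⊢
    rw [h2]
    norm_num
    field_simp
  · have hp2 : p ≠ 2 := by
      rintro rfl
      omega
    simp only [Set.mulIndicator, Set.mem_ofPred_eq, hp, hone, hsq, ZMod.χ₄_nat_eq_if_mod_four,
      ZMod.χ₈_nat_eq_if_mod_eight, ZMod.χ₈'_nat_eq_if_mod_eight, hp2, hodd]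
    have hmod : p % 8 = 1 ∨ p % 8 = 3 ∨ p % 8 = 5 ∨ p % 8 = 7 := by omega
    have h4 : p % 4 = p % 8 % 4 := by omega
    rcases hmod with h | h
    · simp [h, h4]
      left
      field_simp
    rcases h with h | h | h <;>
    · simp [h, h4, hfac]
      field_simp

theorem euler_product_residue_mod8_one :
    Filter.Tendsto
      (fun s : ℝ =>
        (s - 1) * ∏' p : {p : ℕ // p.Prime ∧ p % 8 = 1}, ((1 - (p : ℝ) ^ (-s))⁻¹) ^ 4)
      (nhdsWithin 1 (Set.Ioi 1))
      (nhds ((2 * Real.log (1 + Real.sqrt 2) / Real.pi ^ 2) *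
        ∏' p : {p : ℕ // p.Prime ∧ p % 8 = 1}, ((1 - ((p : ℝ) ^ 2)⁻¹)⁻¹) ^ 2)) := by
  have hlhs {s : ℝ} (hs : 1 < s) :
      ∏' p : {p : ℕ // p.Prime ∧ p % 8 = 1}, ((1 - (p : ℝ) ^ (-s))⁻¹) ^ 4 =
        (oneModEightProd s)⁻¹ ^ 4 := ((hasProd_inv_oneModEightProd hs).pow 4).tprod_eq
  have hrhs : ∏' p : {p : ℕ // p.Prime ∧ p % 8 = 1}, ((1 - ((p : ℝ) ^ 2)⁻¹)⁻¹) ^ 2 =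
      (oneModEightProd 2)⁻¹ ^ 2 := by
    rw [← ((hasProd_inv_oneModEightProd one_lt_two).pow 2).tprod_eq]
    simp
  have htwo : Tendsto (fun s : ℝ ↦ (2 : ℝ) ^ (-s)) (𝓝[>] 1) (𝓝 2⁻¹) := by
    refine tendsto_nhdsWithin_of_tendsto_nhds (Continuous.tendsto' ?_ _ _ (Real.rpow_neg_one 2))
    exact continuous_const.rpow continuous_neg fun _ ↦ Or.inl two_ne_zero
  have hfour : Tendsto (fun s : ℝ ↦ (2 : ℝ) ^ (-(2 * s))) (𝓝[>] 1) (𝓝 4⁻¹) := by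
    have h := tendsto_rpow_neg_two_mul two_ne_zero
    norm_num [Real.rpow_neg] at h
    simpa [Real.rpow_neg] using h
  have hlim := (((((tendsto_sub_mul_realLSeries_one.mul tendsto_realLSeries_χ₄).mul
    tendsto_realLSeries_χ₈).mul tendsto_realLSeries_χ₈').mul
    ((tendsto_oneModEightProd_two_mul.inv₀ (oneModEightProd_ne_zero one_lt_two)).pow 2)).mul
    ((htwo.const_sub 1).mul (((hfour.const_sub 1).inv₀ (by norm_num)).pow 2))).div
    (tendsto_realLSeries_one_two_mul.pow 2) (by positivity)
  rw [hrhs]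
  have hconst : 1 * (Real.pi / 4) * (Real.log (1 + Real.sqrt 2) / Real.sqrt 2) *
      (Real.pi / (2 * Real.sqrt 2)) * (oneModEightProd 2)⁻¹ ^ 2 *
      ((1 - 2⁻¹) * (1 - 4⁻¹)⁻¹ ^ 2) / (Real.pi ^ 2 / 6) ^ 2 =
      2 * Real.log (1 + Real.sqrt 2) / Real.pi ^ 2 * (oneModEightProd 2)⁻¹ ^ 2 := by
    have h2 : Real.sqrt 2 ^ 2 = 2 := Real.sq_sqrt zero_le_two
    have hne := oneModEightProd_ne_zero one_lt_two
    field_simp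
    rw [h2]
    ring
  rw [← hconst]
  refine hlim.congr' ?_
  have hne : ∀ᶠ s : ℝ in 𝓝[>] 1, realLSeries (1 : MulChar (ZMod 1) ℤ) (2 * s) ≠ 0 :=
    tendsto_realLSeries_one_two_mul.eventually_ne (by positivity)
  filter_upwards [self_mem_nhdsWithin, hne] with s (hs : 1 < s) hZ
  rw [Pi.div_apply, hlhs hs, div_eq_iff (pow_ne_zero 2 hZ), mul_assoc (s - 1) _ (_ ^ 2),
    ← realLSeries_prod_eq hs]
  ring
end
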